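/- The set S is closed under reflections in its elements: for all v, w ∈ S, the vector w − 2⟨w,v⟩_ℝ·v (the reflection of w in the hyperplane orthogonal to the unit vector v) again belongs to S. -/

import Mathlib

noncomputable section
open Real Complex

namespace Triacontagonal

/-- The golden ratio. -/
def τ : ℝ := (1 + Real.sqrt 5) / 2

/-- The constant 3^(-1/2) * 5^(-1/4). -/
def k0 : ℝ := (3 : ℝ) ^ (-(1:ℝ)/2) * (5 : ℝ) ^ (-(1:ℝ)/4)

/-- `a` is the positive real with 2a² = 1 + 3^(-1/2)·5^(-1/4)·τ^(3/2). -/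
def a : ℝ := Real.sqrt ((1 + k0 * τ ^ ((3:ℝ)/2)) / 2)

/-- `b` is the positive real with 2b² = 1 + 3^(-1/2)·5^(-1/4)·τ^(-3/2). -/
def b : ℝ := Real.sqrt ((1 + k0 * τ ^ (-((3:ℝ)/2))) / 2)

/-- `c` is the positive real with 2c² = 1 - 3^(-1/2)·5^(-1/4)·τ^(-3/2). -/
def c : ℝ := Real.sqrt ((1 - k0 * τ ^ (-((3:ℝ)/2))) / 2)

/-- `d` is the positive real with 2d² = 1 - 3^(-1/2)·5^(-1/4)·τ^(3/2). -/
def d : ℝ := Real.sqrt ((1 - k0 * τ ^ ((3:ℝ)/2)) / 2)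

/-- `cc n = 2 cos(nπ/30)`. -/
def cc (n : ℤ) : ℝ := 2 * Real.cos (n * Real.pi / 30)

/-- `ω = exp(iπ/30)`, a primitive 60th root of unity. -/
def ω : ℂ := Complex.exp (Real.pi * Complex.I / 30)

def r1 : ℝ := a / cc 9
def r2 : ℝ := b / cc 9
def r3 : ℝ := c / cc 9
def r4 : ℝ := d / cc 9
def r5 : ℝ := a / cc 3
def r6 : ℝ := b / cc 3
def r7 : ℝ := c / cc 3
def r8 : ℝ := d / cc 3

/-- The eight cycles of 30 vectors each in ℂ⁴. -/
def A (n : Fin 30) : Fin 4 → ℂ :=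
  ![(r1 : ℂ) * ω ^ (2 * (n : ℕ)), (r4 : ℂ) * ω ^ (22 * (n : ℕ)),
    (r6 : ℂ) * ω ^ (14 * (n : ℕ) + 1), (r7 : ℂ) * ω ^ (26 * (n : ℕ) + 1)]

def B (n : Fin 30) : Fin 4 → ℂ :=
  ![(r2 : ℂ) * ω ^ (2 * (n : ℕ) + 29), (r3 : ℂ) * ω ^ (22 * (n : ℕ) + 19),
    -((r8 : ℂ) * ω ^ (14 * (n : ℕ) + 24)), -((r5 : ℂ) * ω ^ (26 * (n : ℕ) + 18))]

def C (n : Fin 30) : Fin 4 → ℂ :=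
  ![(r3 : ℂ) * ω ^ (2 * (n : ℕ) + 29), -((r2 : ℂ) * ω ^ (22 * (n : ℕ) + 19)),
    (r5 : ℂ) * ω ^ (14 * (n : ℕ) + 24), -((r8 : ℂ) * ω ^ (26 * (n : ℕ) + 18))]

def D (n : Fin 30) : Fin 4 → ℂ :=
  ![(r4 : ℂ) * ω ^ (2 * (n : ℕ)), -((r1 : ℂ) * ω ^ (22 * (n : ℕ))),
    (r7 : ℂ) * ω ^ (14 * (n : ℕ) + 1), -((r6 : ℂ) * ω ^ (26 * (n : ℕ) + 1))]

def E (n : Fin 30) : Fin 4 → ℂ :=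
  ![(r5 : ℂ) * ω ^ (2 * (n : ℕ)), (r8 : ℂ) * ω ^ (22 * (n : ℕ)),
    -((r2 : ℂ) * ω ^ (14 * (n : ℕ) + 1)), -((r3 : ℂ) * ω ^ (26 * (n : ℕ) + 1))]

def F (n : Fin 30) : Fin 4 → ℂ :=
  ![(r6 : ℂ) * ω ^ (2 * (n : ℕ) + 29), (r7 : ℂ) * ω ^ (22 * (n : ℕ) + 19),
    (r4 : ℂ) * ω ^ (14 * (n : ℕ) + 24), (r1 : ℂ) * ω ^ (26 * (n : ℕ) + 18)]

def G (n : Fin 30) : Fin 4 → ℂ :=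
  ![(r7 : ℂ) * ω ^ (2 * (n : ℕ) + 29), -((r6 : ℂ) * ω ^ (22 * (n : ℕ) + 19)),
    -((r1 : ℂ) * ω ^ (14 * (n : ℕ) + 24)), (r4 : ℂ) * ω ^ (26 * (n : ℕ) + 18)]

def H (n : Fin 30) : Fin 4 → ℂ :=
  ![(r8 : ℂ) * ω ^ (2 * (n : ℕ)), -((r5 : ℂ) * ω ^ (22 * (n : ℕ))),
    -((r3 : ℂ) * ω ^ (14 * (n : ℕ) + 1)), (r2 : ℂ) * ω ^ (26 * (n : ℕ) + 1)]

/-- The set of the 240 vectors. -/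
def S : Set (Fin 4 → ℂ) :=
  {v | ∃ n : Fin 30, v = A n ∨ v = B n ∨ v = C n ∨ v = D n ∨
    v = E n ∨ v = F n ∨ v = G n ∨ v = H n}

/-- The real inner product on ℂ⁴: ⟨v,w⟩_ℝ = Re(Σᵢ vᵢ · conj(wᵢ)). -/
def rinner (v w : Fin 4 → ℂ) : ℝ := (∑ i, v i * star (w i)).re

/-- The associated Euclidean norm. -/
def enorm (v : Fin 4 → ℂ) : ℝ := Real.sqrt (rinner v v)

/-!
Let `ζ` be the diagonal matrix that advances every cycle by one step. Its eigenvalues are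
primitive thirtieth roots of unity, so `ℤ[ζ]` is free with basis `1, ζ, …, ζ ^ 7`, and each of the
eight cycles starts at a `ℤ[ζ]`-multiple of `A 0`. Hence all of `S` has integral coordinates with
respect to `A 0, …, A 7`. The inner products `2⟨ζⁿ A 0, A 0⟩` are combinations of Ramanujan sums
and turn out to be integers, so the reflection in `A 0` is an integral matrix, and that it
preserves the 240 coordinate vectors of `S` is a finite check. Every other element of `S` is the
image of `A 0` under a product of powers of `ζ` and reflections already known to preserve `S`, and
conjugating by this product gives its reflection.
-/

section Reflections

open Set

lemma rinner_comm (v w : Fin 4 → ℂ) : rinner v w = rinner w v := by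
  simp [rinner, mul_comm]

lemma rinner_add_left (u v w : Fin 4 → ℂ) : rinner (u + v) w = rinner u w + rinner v w := by
  simp [rinner, add_mul, Finset.sum_add_distrib]

lemma rinner_smul_left (r : ℝ) (v w : Fin 4 → ℂ) : rinner (r • v) w = r * rinner v w := by
  simp only [rinner, Pi.smul_apply, smul_mul_assoc, ← Finset.smul_sum, Complex.smul_re,
    smul_eq_mul]

/-- The real inner product `rinner` as a bilinear form. -/
def rinnerForm : LinearMap.BilinForm ℝ (Fin 4 → ℂ) :=
  LinearMap.mk₂ ℝ rinner rinner_add_left rinner_smul_left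
    (fun u v w ↦ by simp only [rinner_comm u, rinner_add_left])
    (fun r v w ↦ by rw [rinner_comm, rinner_smul_left, rinner_comm, smul_eq_mul])

/-- The reflection of `ℂ⁴` in the hyperplane orthogonal to the unit vector `v`, as a real-linear
map. -/
def reflect (v : Fin 4 → ℂ) : (Fin 4 → ℂ) →ₗ[ℝ] (Fin 4 → ℂ) :=
  LinearMap.id - ((2 : ℝ) • rinnerForm.flip v).smulRight v

lemma reflect_apply (v w : Fin 4 → ℂ) : reflect v w = w - (2 * rinner w v) • v := rfl

lemma reflect_map {f : (Fin 4 → ℂ) →ₗ[ℝ] (Fin 4 → ℂ)}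
    (isometry : ∀ v w, rinner (f v) (f w) = rinner v w) (v w : Fin 4 → ℂ) :
    reflect (f v) (f w) = f (reflect v w) := by
  rw [reflect_apply, reflect_apply, isometry, map_sub, map_smul]

lemma mapsTo_reflect_map {f : (Fin 4 → ℂ) →ₗ[ℝ] (Fin 4 → ℂ)} {T : Set (Fin 4 → ℂ)}
    (isometry : ∀ v w, rinner (f v) (f w) = rinner v w) (maps : MapsTo f T T) (surj : SurjOn f T T)
    {v : Fin 4 → ℂ} (hv : MapsTo (reflect v) T T) : MapsTo (reflect (f v)) T T := by
  intro w hw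
  obtain ⟨u, hu, rfl⟩ := surj hw
  rw [reflect_map isometry]
  exact maps (hv hu)

variable {u : Fin 4 → ℂ}

lemma rinner_reflect (hu : rinner u u = 1) (v w : Fin 4 → ℂ) :
    rinner (reflect u v) (reflect u w) = rinner v w := by
  calc rinner (reflect u v) (reflect u w)
      = rinnerForm (v - (2 * rinner v u) • u) (w - (2 * rinner w u) • u) := rfl
    _ = rinner v w - 2 * rinner w u * rinner v u
          - 2 * rinner v u * (rinner u w - 2 * rinner w u * rinner u u) := by
      simp only [map_sub, map_smul, LinearMap.sub_apply, LinearMap.smul_apply, smul_eq_mul,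
        rinnerForm, LinearMap.mk₂_apply]
      ring
    _ = rinner v w := by
      rw [hu, rinner_comm u w]
      ring

lemma reflect_reflect (hu : rinner u u = 1) (w : Fin 4 → ℂ) : reflect u (reflect u w) = w := by
  have reflect_self : reflect u u = -u := by
    rw [reflect_apply, hu, mul_one, two_smul]
    abel
  rw [reflect_apply u w, map_sub, map_smul, reflect_self, reflect_apply, smul_neg]
  abel

lemma mapsTo_reflect_reflect {T : Set (Fin 4 → ℂ)} {v : Fin 4 → ℂ} (hu : rinner u u = 1)
    (maps : MapsTo (reflect u) T T) (hv : MapsTo (reflect v) T T) :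
    MapsTo (reflect (reflect u v)) T T :=
  mapsTo_reflect_map (rinner_reflect hu) maps
    (fun w hw ↦ ⟨reflect u w, maps hw, reflect_reflect hu w⟩) hv

end Reflections

section Cosines

lemma cc_mul_cc (m n : ℤ) : cc m * cc n = cc (m + n) + cc (m - n) := by
  have sum_arg : ((m + n : ℤ) : ℝ) * π / 30 = m * π / 30 + n * π / 30 := by push_cast; ring
  have sub_arg : ((m - n : ℤ) : ℝ) * π / 30 = m * π / 30 - n * π / 30 := by push_cast; ring
  rw [cc, cc, cc, cc, sum_arg, sub_arg, Real.cos_add, Real.cos_sub]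
  ring

lemma cc_neg (n : ℤ) : cc (-n) = cc n := by
  have arg : ((-n : ℤ) : ℝ) * π / 30 = -(n * π / 30) := by push_cast; ring
  rw [cc, cc, arg, Real.cos_neg]

lemma cc_thirty_sub (n : ℤ) : cc (30 - n) = -cc n := by
  have arg : ((30 - n : ℤ) : ℝ) * π / 30 = π - n * π / 30 := by push_cast; ring
  rw [cc, cc, arg, Real.cos_pi_sub, mul_neg]

lemma cc_add_thirty (n : ℤ) : cc (n + 30) = -cc n := by
  rw [← cc_neg n, ← cc_thirty_sub, sub_neg_eq_add, add_comm]

lemma cc_pos {n : ℤ} (lower : -15 < n := by norm_num) (upper : n < 15 := by norm_num) :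
    0 < cc n := by
  have hlower : (-15 : ℝ) < n := by exact_mod_cast lower
  have hupper : (n : ℝ) < 15 := by exact_mod_cast upper
  refine mul_pos two_pos (Real.cos_pos_of_mem_Ioo ⟨?_, ?_⟩) <;> nlinarith [Real.pi_pos]

lemma cc_zero : cc 0 = 2 := by simp [cc]

lemma cc_sq (n : ℤ) : cc n ^ 2 = cc (2 * n) + 2 := by
  rw [sq, cc_mul_cc, sub_self, cc_zero, two_mul]

lemma cc_ten : cc 10 = 1 := by
  have arg : ((10 : ℤ) : ℝ) * π / 30 = π / 3 := by push_cast; ring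
  rw [cc, arg, Real.cos_pi_div_three]
  norm_num

lemma cc_fifteen : cc 15 = 0 :=
  self_eq_neg.mp (cc_thirty_sub 15)

lemma cc_six : cc 6 = τ := by
  have arg : ((6 : ℤ) : ℝ) * π / 30 = π / 5 := by push_cast; ring
  rw [cc, arg, Real.cos_pi_div_five, τ]
  ring

lemma cc_six_sq : cc 6 ^ 2 = cc 6 + 1 := by
  rw [cc_six]
  exact Real.goldenRatio_sq

lemma cc_twelve : cc 12 = cc 6 - 1 := by
  have double_angle : cc 6 ^ 2 = cc 12 + 2 := cc_sq 6
  linarith [cc_six_sq]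

lemma cc_eight : cc 8 = cc 2 - cc 6 + 1 := by
  have product : cc 10 * cc 2 = cc 12 + cc 8 := cc_mul_cc 10 2
  rw [cc_ten, cc_twelve] at product
  linarith

lemma cc_fourteen : cc 14 = cc 4 - cc 6 := by
  have product : cc 10 * cc 4 = cc 14 + cc 6 := cc_mul_cc 10 4
  rw [cc_ten] at product
  linarith

lemma cc_two_sq : cc 2 ^ 2 = cc 4 + 2 := cc_sq 2

lemma cc_two_mul_cc_four : cc 2 * cc 4 = cc 2 + cc 6 := by
  rw [mul_comm, add_comm]
  exact cc_mul_cc 4 2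

lemma cc_two_mul_cc_six : cc 2 * cc 6 = cc 2 + cc 4 - cc 6 + 1 := by
  have product : cc 6 * cc 2 = cc 8 + cc 4 := cc_mul_cc 6 2
  linarith [cc_eight]

lemma cc_four_sq : cc 4 ^ 2 = cc 2 - cc 6 + 3 := by
  have double_angle : cc 4 ^ 2 = cc 8 + 2 := cc_sq 4
  linarith [cc_eight]

lemma cc_four_mul_cc_six : cc 4 * cc 6 = cc 2 + 1 := by
  have product : cc 6 * cc 4 = cc 10 + cc 2 := cc_mul_cc 6 4
  linarith [cc_ten]

lemma cc_one_sq : cc 1 ^ 2 = cc 2 + 2 := cc_sq 1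

lemma cc_three_sq : cc 3 ^ 2 = cc 6 + 2 := cc_sq 3

lemma cc_five_sq : cc 5 ^ 2 = 3 := by
  have double_angle : cc 5 ^ 2 = cc 10 + 2 := cc_sq 5
  linarith [cc_ten]

lemma cc_seven_sq : cc 7 ^ 2 = cc 4 - cc 6 + 2 := by
  have double_angle : cc 7 ^ 2 = cc 14 + 2 := cc_sq 7
  linarith [cc_fourteen]

lemma cc_nine_sq : cc 9 ^ 2 = 3 - cc 6 := by
  have double_angle : cc 9 ^ 2 = cc 18 + 2 := cc_sq 9
  have supplement : cc 18 = -cc 12 := cc_thirty_sub 12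
  linarith [cc_twelve]

lemma cc_eleven_sq : cc 11 ^ 2 = 1 + cc 6 - cc 2 := by
  have double_angle : cc 11 ^ 2 = cc 22 + 2 := cc_sq 11
  have supplement : cc 22 = -cc 8 := cc_thirty_sub 8
  linarith [cc_eight]

lemma cc_thirteen_sq : cc 13 ^ 2 = 2 - cc 4 := by
  have double_angle : cc 13 ^ 2 = cc 26 + 2 := cc_sq 13
  have supplement : cc 26 = -cc 4 := cc_thirty_sub 4
  linarith

lemma cc_five_mul_cc_nine : cc 5 * cc 9 = 2 * cc 4 - cc 6 := by
  have product : cc 9 * cc 5 = cc 14 + cc 4 := cc_mul_cc 9 5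
  linarith [cc_fourteen]

lemma cc_six_mul_cc_nine : cc 6 * cc 9 = cc 3 := by
  have product : cc 9 * cc 6 = cc 15 + cc 3 := cc_mul_cc 9 6
  linarith [cc_fifteen]

lemma cc_twelve_mul_cc_three : cc 12 * cc 3 = cc 9 := by
  have product : cc 12 * cc 3 = cc 15 + cc 9 := cc_mul_cc 12 3
  linarith [cc_fifteen]

end Cosines

section Radii

lemma k0_pos : 0 < k0 := by
  unfold k0
  positivity

lemma τ_pos : 0 < τ := Real.goldenRatio_pos

lemma k0_sq_mul : k0 ^ 2 * (3 * √5) = 1 := by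
  have three_part : ((3 : ℝ) ^ (-(1 : ℝ) / 2)) ^ 2 = 3⁻¹ := by
    rw [← Real.rpow_mul_natCast (by norm_num), ← Real.rpow_neg_one]
    norm_num
  have five_part : ((5 : ℝ) ^ (-(1 : ℝ) / 4)) ^ 2 = (√5)⁻¹ := by
    rw [← Real.rpow_mul_natCast (by norm_num), Real.sqrt_eq_rpow, ← Real.rpow_neg (by norm_num)]
    norm_num
  rw [k0, mul_pow, three_part, five_part]
  field_simp

lemma sqrt_five_eq : √5 = 2 * cc 6 - 1 := by
  rw [cc_six, τ]
  ring

lemma τ_rpow_sq (s : ℝ) : (τ ^ (s / 2)) ^ 2 = τ ^ s := by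
  rw [← Real.rpow_mul_natCast τ_pos.le]
  norm_num

lemma k0_mul_τ_rpow : k0 * τ ^ ((3 : ℝ) / 2) * (cc 5 * cc 9) = cc 6 := by
  have h5 : 0 < cc 5 := cc_pos
  have h6 : 0 < cc 6 := cc_pos
  have h9 : 0 < cc 9 := cc_pos
  have hk := k0_pos
  have hτ := τ_pos
  refine (pow_left_inj₀ (by positivity) h6.le two_ne_zero).mp ?_
  have cube : τ ^ (3 : ℝ) = cc 6 ^ 3 := by rw [cc_six]; norm_cast
  rw [mul_pow, mul_pow, mul_pow, τ_rpow_sq, cube, cc_five_sq, cc_nine_sq]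
  have golden : cc 6 * (3 - cc 6) = √5 := by
    linear_combination -cc_six_sq - sqrt_five_eq
  linear_combination 3 * k0 ^ 2 * cc 6 ^ 2 * golden + cc 6 ^ 2 * k0_sq_mul

lemma k0_mul_τ_rpow_neg : k0 * τ ^ (-((3 : ℝ) / 2)) * (cc 5 * cc 9) = 2 - cc 6 := by
  have inverse : τ ^ (-((3 : ℝ) / 2)) * cc 6 ^ 3 = τ ^ ((3 : ℝ) / 2) := by
    rw [cc_six, ← Real.rpow_natCast, ← Real.rpow_add τ_pos]
    norm_num
  have h6 : cc 6 ≠ 0 := ne_of_gt cc_pos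
  refine mul_right_cancel₀ (pow_ne_zero 3 h6) ?_
  linear_combination k0 * cc 5 * cc 9 * inverse + k0_mul_τ_rpow
    + (cc 6 ^ 2 - cc 6) * cc_six_sq

lemma cc_five_mul_cc_nine_pos : 0 < cc 5 * cc 9 :=
  mul_pos cc_pos cc_pos

lemma sqrt_sq_mul {x y z : ℝ} (hy : 0 < y) (hz : 0 ≤ z) (h : x * y = z) : √x ^ 2 * y = z := by
  rw [Real.sq_sqrt (nonneg_of_mul_nonneg_left (h ▸ hz) hy), h]

lemma a_sq_mul : a ^ 2 * (cc 5 * cc 9) = cc 4 := by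
  refine sqrt_sq_mul cc_five_mul_cc_nine_pos (le_of_lt cc_pos) ?_
  linear_combination (k0_mul_τ_rpow + cc_five_mul_cc_nine) / 2

lemma b_sq_mul : b ^ 2 * (cc 5 * cc 9) = cc 4 - cc 6 + 1 := by
  have h14 : 0 < cc 14 := cc_pos
  refine sqrt_sq_mul cc_five_mul_cc_nine_pos (by linarith [cc_fourteen]) ?_
  linear_combination (k0_mul_τ_rpow_neg + cc_five_mul_cc_nine) / 2

lemma c_sq_mul : c ^ 2 * (cc 5 * cc 9) = cc 4 - 1 := by
  have h8 : 0 < cc 8 := cc_pos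
  have h12 : 0 < cc 12 := cc_pos
  have product : cc 12 * cc 8 = cc 20 + cc 4 := cc_mul_cc 12 8
  have supplement : cc 20 = -cc 10 := cc_thirty_sub 10
  refine sqrt_sq_mul cc_five_mul_cc_nine_pos (by nlinarith [cc_ten]) ?_
  linear_combination (cc_five_mul_cc_nine - k0_mul_τ_rpow_neg) / 2

lemma d_sq_mul : d ^ 2 * (cc 5 * cc 9) = cc 4 - cc 6 := by
  have h14 : 0 < cc 14 := cc_pos
  refine sqrt_sq_mul cc_five_mul_cc_nine_pos (by linarith [cc_fourteen]) ?_
  linear_combination (cc_five_mul_cc_nine - k0_mul_τ_rpow) / 2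

lemma eq_mul_of_sq_mul_eq {x y k z : ℝ} (hx : 0 ≤ x) (hk : 0 ≤ k) (hy : 0 ≤ y) (hz : z ≠ 0)
    (h : x ^ 2 * z = k ^ 2 * (y ^ 2 * z)) : x = k * y := by
  refine (pow_left_inj₀ hx (mul_nonneg hk hy) two_ne_zero).mp (mul_right_cancel₀ hz ?_)
  rw [h, mul_pow, mul_assoc]

lemma b_eq_mul_a : b = cc 11 * a := by
  refine eq_mul_of_sq_mul_eq (Real.sqrt_nonneg _) (le_of_lt cc_pos)
    (Real.sqrt_nonneg _) cc_five_mul_cc_nine_pos.ne' ?_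
  rw [a_sq_mul, b_sq_mul, cc_eleven_sq]
  linear_combination cc_two_mul_cc_four - cc_four_mul_cc_six

lemma c_eq_mul_d : c = cc 1 * d := by
  refine eq_mul_of_sq_mul_eq (Real.sqrt_nonneg _) (le_of_lt cc_pos)
    (Real.sqrt_nonneg _) cc_five_mul_cc_nine_pos.ne' ?_
  rw [c_sq_mul, d_sq_mul, cc_one_sq]
  linear_combination cc_two_mul_cc_six - cc_two_mul_cc_four

lemma d_eq_mul_b : d = cc 13 * b := by
  refine eq_mul_of_sq_mul_eq (Real.sqrt_nonneg _) (le_of_lt cc_pos)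
    (Real.sqrt_nonneg _) cc_five_mul_cc_nine_pos.ne' ?_
  rw [d_sq_mul, b_sq_mul, cc_thirteen_sq]
  linear_combination cc_four_sq - cc_four_mul_cc_six

lemma a_eq_mul_c : a = cc 7 * c := by
  refine eq_mul_of_sq_mul_eq (Real.sqrt_nonneg _) (le_of_lt cc_pos)
    (Real.sqrt_nonneg _) cc_five_mul_cc_nine_pos.ne' ?_
  rw [a_sq_mul, c_sq_mul, cc_seven_sq]
  linear_combination cc_four_mul_cc_six - cc_four_sq

lemma a_eq_mul_d : a = (1 + cc 2) * d := by
  have product : cc 7 * cc 1 = cc 8 + cc 6 := cc_mul_cc 7 1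
  rw [a_eq_mul_c, c_eq_mul_d, ← mul_assoc, product, cc_eight]
  ring

lemma b_eq_mul_c : b = (1 + cc 14) * c := by
  have product : cc 11 * cc 7 = cc 18 + cc 4 := cc_mul_cc 11 7
  have supplement : cc 18 = -cc 12 := cc_thirty_sub 12
  rw [b_eq_mul_a, a_eq_mul_c, ← mul_assoc, product, supplement, cc_twelve, cc_fourteen]
  ring

lemma c_eq_mul_b : c = (cc 4 - 1) * b := by
  have product : cc 13 * cc 1 = cc 14 + cc 12 := cc_mul_cc 13 1
  rw [c_eq_mul_d, d_eq_mul_b, ← mul_assoc, mul_comm (cc 1), product, cc_twelve, cc_fourteen]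
  ring

lemma d_eq_mul_a : d = (cc 8 - 1) * a := by
  have product : cc 13 * cc 11 = cc 24 + cc 2 := cc_mul_cc 13 11
  have supplement : cc 24 = -cc 6 := cc_thirty_sub 6
  rw [d_eq_mul_b, b_eq_mul_a, ← mul_assoc, product, supplement, cc_eight]
  ring

lemma cc_twelve_mul_div_cc_nine (x : ℝ) : cc 12 * (x / cc 9) = x / cc 3 := by
  have h3 : cc 3 ≠ 0 := ne_of_gt cc_pos
  have h9 : cc 9 ≠ 0 := ne_of_gt cc_pos
  field_simp
  linear_combination x * cc_twelve_mul_cc_three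

lemma cc_six_mul_div_cc_three (x : ℝ) : cc 6 * (x / cc 3) = x / cc 9 := by
  have h3 : cc 3 ≠ 0 := ne_of_gt cc_pos
  have h9 : cc 9 ≠ 0 := ne_of_gt cc_pos
  field_simp
  linear_combination x * cc_six_mul_cc_nine

lemma sq_div_cc_nine {x y z : ℝ} (hx : x ^ 2 * (cc 5 * cc 9) = y)
    (h : 15 * y = z * ((2 * cc 4 - cc 6) * (3 - cc 6))) : 15 * (x / cc 9) ^ 2 = z := by
  have h5 : cc 5 ≠ 0 := ne_of_gt cc_pos
  have h9 : cc 9 ≠ 0 := ne_of_gt cc_pos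
  have denominator : (2 * cc 4 - cc 6) * (3 - cc 6) = cc 5 * cc 9 * cc 9 ^ 2 := by
    rw [cc_five_mul_cc_nine, cc_nine_sq]
  rw [denominator] at h
  field_simp
  refine mul_right_cancel₀ (mul_ne_zero h5 h9) ?_
  linear_combination 15 * hx + h

lemma sq_div_cc_three {x y z : ℝ} (hx : x ^ 2 * (cc 5 * cc 9) = y)
    (h : 15 * y = z * ((2 * cc 4 - cc 6) * (cc 6 + 2))) : 15 * (x / cc 3) ^ 2 = z := by
  have h5 : cc 5 ≠ 0 := ne_of_gt cc_pos
  have h9 : cc 9 ≠ 0 := ne_of_gt cc_pos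
  have h3 : cc 3 ≠ 0 := ne_of_gt cc_pos
  have denominator : (2 * cc 4 - cc 6) * (cc 6 + 2) = cc 5 * cc 9 * cc 3 ^ 2 := by
    rw [cc_five_mul_cc_nine, cc_three_sq]
  rw [denominator] at h
  field_simp
  refine mul_right_cancel₀ (mul_ne_zero h5 h9) ?_
  linear_combination 15 * hx + h

lemma r1_sq : 15 * r1 ^ 2 = 4 + 2 * cc 2 + cc 4 := by
  refine sq_div_cc_nine a_sq_mul ?_
  grind [cc_two_sq, cc_two_mul_cc_four, cc_two_mul_cc_six, cc_four_sq, cc_four_mul_cc_six,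
    cc_six_sq]

lemma r4_sq : 15 * r4 ^ 2 = 4 + 2 * cc 22 + cc 44 := by
  have h22 : cc 22 = -cc 8 := cc_thirty_sub 8
  have h44 : cc 44 = -cc 14 := cc_add_thirty 14
  rw [h22, h44, cc_eight, cc_fourteen]
  refine sq_div_cc_nine d_sq_mul ?_
  grind [cc_two_sq, cc_two_mul_cc_four, cc_two_mul_cc_six, cc_four_sq, cc_four_mul_cc_six,
    cc_six_sq]

lemma r6_sq : 15 * r6 ^ 2 = 4 + 2 * cc 14 + cc 28 := by
  have h28 : cc 28 = -cc 2 := cc_thirty_sub 2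
  rw [h28, cc_fourteen]
  refine sq_div_cc_three b_sq_mul ?_
  grind [cc_two_sq, cc_two_mul_cc_four, cc_two_mul_cc_six, cc_four_sq, cc_four_mul_cc_six,
    cc_six_sq]

lemma r7_sq : 15 * r7 ^ 2 = 4 + 2 * cc 26 + cc 52 := by
  have h26 : cc 26 = -cc 4 := cc_thirty_sub 4
  have h52 : cc 52 = -cc 22 := cc_add_thirty 22
  have h22 : cc 22 = -cc 8 := cc_thirty_sub 8
  rw [h26, h52, h22, cc_eight]
  refine sq_div_cc_three c_sq_mul ?_
  grind [cc_two_sq, cc_two_mul_cc_four, cc_two_mul_cc_six, cc_four_sq, cc_four_mul_cc_six,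
    cc_six_sq]

end Radii

section RamanujanSum

lemma cc_add_thirty_mul (n m : ℤ) : cc (n + 30 * m) = (-1) ^ m * cc n := by
  have arg : ((n + 30 * m : ℤ) : ℝ) * π / 30 = n * π / 30 + m * π := by push_cast; ring
  rw [cc, cc, arg, Real.cos_add_int_mul_pi]
  ring

lemma cc_add_sixty_mul (n m : ℤ) : cc (n + 60 * m) = cc n := by
  have := cc_add_thirty_mul n (2 * m)
  rwa [zpow_mul, show (-1 : ℝ) ^ (2 : ℤ) = 1 by norm_num, one_zpow, one_mul, ← mul_assoc] at this

/-- The sum of the `m`-th powers of the primitive thirtieth roots of unity, grouped into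
conjugate pairs. -/
def ramanujanSum (m : ℤ) : ℝ := cc (2 * m) + cc (22 * m) + cc (14 * m) + cc (26 * m)

lemma ramanujanSum_eq_mul (m : ℤ) :
    ramanujanSum m = (-1) ^ m * (cc (20 * m) * (cc (12 * m) + cc (24 * m))) := by
  have h2 : cc (2 * m) = (-1) ^ m * cc (32 * m) := by
    rw [← cc_neg (32 * m), ← cc_add_thirty_mul, ← cc_neg]
    ring_nf
  have h22 : cc (22 * m) = (-1) ^ m * cc (8 * m) := by
    rw [← cc_neg (8 * m), ← cc_add_thirty_mul]
    ring_nf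
  have h14 : cc (14 * m) = (-1) ^ m * cc (44 * m) := by
    rw [← cc_neg (44 * m), ← cc_add_thirty_mul, ← cc_neg]
    ring_nf
  have h26 : cc (26 * m) = (-1) ^ m * cc (-4 * m) := by
    rw [← cc_add_thirty_mul]
    ring_nf
  rw [ramanujanSum, h2, h22, h14, h26, mul_add, cc_mul_cc, cc_mul_cc]
  ring_nf

lemma cc_mul_eq_cc_mul_emod (n m : ℤ) {q : ℤ} (h : 60 ∣ n * q) :
    cc (n * m) = cc (n * (m % q)) := by
  obtain ⟨r, hr⟩ := h
  rw [← cc_add_sixty_mul (n * (m % q)) (r * (m / q))]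
  congr 1
  linear_combination (-n) * Int.emod_add_mul_ediv m q + (m / q) * hr

lemma cc_twenty_mul (m : ℤ) : cc (20 * m) = if 3 ∣ m then 2 else -1 := by
  have h20 : cc 20 = -cc 10 := cc_thirty_sub 10
  have h40 : cc 40 = -cc 10 := cc_add_thirty 10
  rw [cc_mul_eq_cc_mul_emod 20 m (q := 3) (by norm_num)]
  have residues : m % 3 = 0 ∨ m % 3 = 1 ∨ m % 3 = 2 := by omega
  rcases residues with h | h | h <;>
    simp [h, Int.dvd_iff_emod_eq_zero, cc_zero, h20, h40, cc_ten]

lemma cc_twelve_mul_add (m : ℤ) :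
    cc (12 * m) + cc (24 * m) = if 5 ∣ m then 4 else -1 := by
  have h24 : cc 24 = -cc 6 := cc_thirty_sub 6
  have h36 : cc 36 = -cc 6 := cc_add_thirty 6
  have h48 : cc 48 = -cc 18 := cc_add_thirty 18
  have h18 : cc 18 = -cc 12 := cc_thirty_sub 12
  have h72 : cc 72 = -cc 42 := cc_add_thirty 42
  have h42 : cc 42 = -cc 12 := cc_add_thirty 12
  have h96 : cc 96 = -cc 66 := cc_add_thirty 66
  have h66 : cc 66 = -cc 36 := cc_add_thirty 36
  rw [cc_mul_eq_cc_mul_emod 12 m (q := 5) (by norm_num),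
    cc_mul_eq_cc_mul_emod 24 m (q := 5) (by norm_num)]
  have residues : m % 5 = 0 ∨ m % 5 = 1 ∨ m % 5 = 2 ∨ m % 5 = 3 ∨ m % 5 = 4 := by omega
  rcases residues with h | h | h | h | h <;>
    simp [h, Int.dvd_iff_emod_eq_zero, cc_zero, h24, h36, h48, h18, h72, h42, h96, h66,
      cc_twelve] <;> ring

end RamanujanSum

section RootsOfUnity

/-- The diagonal of the rotation of `ℂ⁴` that advances each of the eight cycles by one step;
it acts by the multiplication of the ring `Fin 4 → ℂ`. -/
def ζ : Fin 4 → ℂ := ![ω ^ 2, ω ^ 22, ω ^ 14, ω ^ 26]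

lemma isPrimitiveRoot_ω : IsPrimitiveRoot ω 60 := by
  have exponent : (π : ℂ) * I / 30 = 2 * π * I / (60 : ℕ) := by push_cast; ring
  rw [ω, exponent]
  exact Complex.isPrimitiveRoot_exp 60 (by norm_num)

lemma ω_pow_thirty : ω ^ 30 = -1 :=
  (isPrimitiveRoot_ω.pow (by norm_num) (show 60 = 30 * 2 by norm_num)).eq_neg_one_of_two_right

lemma ω_pow_of_thirty_le {n : ℕ} (h : 30 ≤ n) : ω ^ n = -ω ^ (n - 30) := by
  conv_lhs => rw [← Nat.add_sub_cancel' h, pow_add, ω_pow_thirty, neg_one_mul]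

lemma norm_ω : ‖ω‖ = 1 := isPrimitiveRoot_ω.norm'_eq_one (by norm_num)

lemma re_ω_pow (n : ℕ) : (ω ^ n).re = cc n / 2 := by
  have exponent : (n : ℂ) * (π * I / 30) = ((n * π / 30 : ℝ) : ℂ) * I := by push_cast; ring
  rw [ω, ← Complex.exp_nat_mul, exponent, Complex.exp_ofReal_mul_I_re, cc]
  push_cast
  ring

lemma ofReal_cc {n : ℕ} (h : n ≤ 60) : (cc n : ℂ) = ω ^ n + ω ^ (60 - n) := by
  have hω : ω ≠ 0 := isPrimitiveRoot_ω.ne_zero (by norm_num)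
  have conjugate : ω ^ (60 - n) = (starRingEnd ℂ) (ω ^ n) := by
    rw [pow_sub₀ _ hω h, isPrimitiveRoot_ω.pow_eq_one, one_mul, Complex.inv_eq_conj]
    rw [norm_pow, norm_ω, one_pow]
  rw [conjugate, Complex.add_conj, re_ω_pow]
  push_cast
  ring

lemma isPrimitiveRoot_ζ (i : Fin 4) : IsPrimitiveRoot (ζ i) 30 := by
  have hω : IsPrimitiveRoot (ω ^ 2) 30 := isPrimitiveRoot_ω.pow (by norm_num) (by norm_num)
  have pow_coprime (j : ℕ) (hj : j.Coprime 30) : IsPrimitiveRoot (ω ^ (2 * j)) 30 := by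
    rw [pow_mul]
    exact hω.pow_of_coprime j hj
  fin_cases i
  · exact pow_coprime 1 (by norm_num)
  · exact pow_coprime 11 (by norm_num)
  · exact pow_coprime 7 (by norm_num)
  · exact pow_coprime 13 (by norm_num)

lemma cyclotomic_thirty_relation {R : Type*} [CommRing R] [IsDomain R] {z : R}
    (hz : IsPrimitiveRoot z 30) : z ^ 8 = -z ^ 7 + z ^ 5 + z ^ 4 + z ^ 3 - z - 1 := by
  have pow_fifteen : z ^ 15 = -1 :=
    (hz.pow (by norm_num) (show 30 = 15 * 2 by norm_num)).eq_neg_one_of_two_right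
  have pow_three_ne : z ^ 3 + 1 ≠ 0 := fun h ↦ by
    have : z ^ 6 = 1 := by linear_combination (z ^ 3 - 1) * h
    exact hz.pow_ne_one_of_pos_of_lt (by norm_num) (by norm_num) this
  have pow_five_ne : z ^ 5 + 1 ≠ 0 := fun h ↦ by
    have : z ^ 10 = 1 := by linear_combination (z ^ 5 - 1) * h
    exact hz.pow_ne_one_of_pos_of_lt (by norm_num) (by norm_num) this
  have factored : (z ^ 5 + 1) * (z ^ 3 + 1) *
      (z ^ 8 - (-z ^ 7 + z ^ 5 + z ^ 4 + z ^ 3 - z - 1)) = 0 := by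
    linear_combination (z + 1) * pow_fifteen
  have := (mul_eq_zero.mp factored).resolve_left (mul_ne_zero pow_five_ne pow_three_ne)
  linear_combination this

end RootsOfUnity

section Cycles

lemma A_eq (n : Fin 30) : A n = ζ ^ (n : ℕ) * A 0 := by
  ext i; fin_cases i <;> simp [A, ζ] <;> ring

lemma B_eq (n : Fin 30) : B n = ζ ^ (n : ℕ) * B 0 := by
  ext i; fin_cases i <;> simp [B, ζ] <;> ring

lemma C_eq (n : Fin 30) : C n = ζ ^ (n : ℕ) * C 0 := by
  ext i; fin_cases i <;> simp [C, ζ] <;> ring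

lemma D_eq (n : Fin 30) : D n = ζ ^ (n : ℕ) * D 0 := by
  ext i; fin_cases i <;> simp [D, ζ] <;> ring

lemma E_eq (n : Fin 30) : E n = ζ ^ (n : ℕ) * E 0 := by
  ext i; fin_cases i <;> simp [E, ζ] <;> ring

lemma F_eq (n : Fin 30) : F n = ζ ^ (n : ℕ) * F 0 := by
  ext i; fin_cases i <;> simp [F, ζ] <;> ring

lemma G_eq (n : Fin 30) : G n = ζ ^ (n : ℕ) * G 0 := by
  ext i; fin_cases i <;> simp [G, ζ] <;> ring

lemma H_eq (n : Fin 30) : H n = ζ ^ (n : ℕ) * H 0 := by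
  ext i; fin_cases i <;> simp [H, ζ] <;> ring

lemma ζ_pow_two_add_sub_one :
    ζ ^ 2 + ζ ^ 28 - 1 = ![(cc 4 - 1 : ℂ), -(1 + cc 14), -(1 + cc 2), cc 8 - 1] := by
  have h2 : (cc 2 : ℂ) = ω ^ 2 + ω ^ 58 := ofReal_cc (n := 2) (by norm_num)
  have h4 : (cc 4 : ℂ) = ω ^ 4 + ω ^ 56 := ofReal_cc (n := 4) (by norm_num)
  have h8 : (cc 8 : ℂ) = ω ^ 8 + ω ^ 52 := ofReal_cc (n := 8) (by norm_num)
  have h14 : (cc 14 : ℂ) = ω ^ 14 + ω ^ 46 := ofReal_cc (n := 14) (by norm_num)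
  ext i
  fin_cases i <;> simp [ζ, h2, h4, h8, h14, ← pow_mul, ω_pow_of_thirty_le] <;> ring

lemma ζ_pow_four_add_sub_one :
    ζ ^ 4 + ζ ^ 26 - 1 = ![(cc 8 - 1 : ℂ), -(1 + cc 2), cc 4 - 1, -(1 + cc 14)] := by
  have h2 : (cc 2 : ℂ) = ω ^ 2 + ω ^ 58 := ofReal_cc (n := 2) (by norm_num)
  have h4 : (cc 4 : ℂ) = ω ^ 4 + ω ^ 56 := ofReal_cc (n := 4) (by norm_num)
  have h8 : (cc 8 : ℂ) = ω ^ 8 + ω ^ 52 := ofReal_cc (n := 8) (by norm_num)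
  have h14 : (cc 14 : ℂ) = ω ^ 14 + ω ^ 46 := ofReal_cc (n := 14) (by norm_num)
  ext i
  fin_cases i <;> simp [ζ, h2, h4, h8, h14, ← pow_mul, ω_pow_of_thirty_le] <;> ring

lemma ζ_pow_six_add : ζ ^ 6 + ζ ^ 24 = ![(cc 12 : ℂ), cc 12, -cc 6, -cc 6] := by
  have h6 : (cc 6 : ℂ) = ω ^ 6 + ω ^ 54 := ofReal_cc (n := 6) (by norm_num)
  have h12 : (cc 12 : ℂ) = ω ^ 12 + ω ^ 48 := ofReal_cc (n := 12) (by norm_num)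
  ext i
  fin_cases i <;> simp [ζ, h6, h12, ← pow_mul, ω_pow_of_thirty_le, add_comm]

lemma B_zero_eq : B 0 = (ζ ^ 9 + ζ ^ 20) * A 0 := by
  have h2 : r2 = cc 11 * r1 := by rw [r2, r1, b_eq_mul_a, mul_div_assoc]
  have h3 : r3 = cc 1 * r4 := by rw [r3, r4, c_eq_mul_d, mul_div_assoc]
  have h8 : r8 = cc 13 * r6 := by rw [r8, r6, d_eq_mul_b, mul_div_assoc]
  have h5 : r5 = cc 7 * r7 := by rw [r7, r5, a_eq_mul_c, mul_div_assoc]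
  have h11 : (cc 11 : ℂ) = ω ^ 11 + ω ^ 49 := ofReal_cc (n := 11) (by norm_num)
  have h1 : (cc 1 : ℂ) = ω ^ 1 + ω ^ 59 := ofReal_cc (n := 1) (by norm_num)
  have h13 : (cc 13 : ℂ) = ω ^ 13 + ω ^ 47 := ofReal_cc (n := 13) (by norm_num)
  have h7 : (cc 7 : ℂ) = ω ^ 7 + ω ^ 53 := ofReal_cc (n := 7) (by norm_num)
  ext i
  fin_cases i <;>
    simp [A, B, ζ, h2, h3, h8, h5, h11, h1, h13, h7] <;>
    ring_nf <;>
    simp [ω_pow_of_thirty_le] <;> ring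

lemma C_zero_eq : C 0 = (ζ ^ 2 + ζ ^ 28 - 1) * B 0 := by
  have h2 : (1 + cc 14 : ℂ) * r3 = r2 := by
    simp [r2, r3, b_eq_mul_c, mul_div_assoc]
  have h3 : (cc 4 - 1 : ℂ) * r2 = r3 := by
    simp [r2, r3, c_eq_mul_b, mul_div_assoc]
  have h5 : (1 + cc 2 : ℂ) * r8 = r5 := by
    simp [r5, r8, a_eq_mul_d, mul_div_assoc]
  have h8 : (cc 8 - 1 : ℂ) * r5 = r8 := by
    simp [r5, r8, d_eq_mul_a, mul_div_assoc]
  ext i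
  fin_cases i <;> simp [B, C, ζ_pow_two_add_sub_one, ← mul_assoc, h2, h3, h5, h8, -neg_add_rev]

lemma D_zero_eq : D 0 = (ζ ^ 4 + ζ ^ 26 - 1) * A 0 := by
  have h1 : (1 + cc 2 : ℂ) * r4 = r1 := by
    simp [r1, r4, a_eq_mul_d, mul_div_assoc]
  have h4 : (cc 8 - 1 : ℂ) * r1 = r4 := by
    simp [r1, r4, d_eq_mul_a, mul_div_assoc]
  have h6 : (1 + cc 14 : ℂ) * r7 = r6 := by
    simp [r6, r7, b_eq_mul_c, mul_div_assoc]
  have h7 : (cc 4 - 1 : ℂ) * r6 = r7 := by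
    simp [r6, r7, c_eq_mul_b, mul_div_assoc]
  ext i
  fin_cases i <;> simp [A, D, ζ_pow_four_add_sub_one, ← mul_assoc, h1, h4, h6, h7, -neg_add_rev]

lemma cc_twelve_mul_radius :
    (cc 12 * r1 : ℂ) = r5 ∧ (cc 12 * r2 : ℂ) = r6 ∧ (cc 12 * r3 : ℂ) = r7 ∧
      (cc 12 * r4 : ℂ) = r8 :=
  ⟨mod_cast cc_twelve_mul_div_cc_nine a, mod_cast cc_twelve_mul_div_cc_nine b,
    mod_cast cc_twelve_mul_div_cc_nine c, mod_cast cc_twelve_mul_div_cc_nine d⟩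

lemma cc_six_mul_radius :
    (cc 6 * r5 : ℂ) = r1 ∧ (cc 6 * r6 : ℂ) = r2 ∧ (cc 6 * r7 : ℂ) = r3 ∧ (cc 6 * r8 : ℂ) = r4 :=
  ⟨mod_cast cc_six_mul_div_cc_three a, mod_cast cc_six_mul_div_cc_three b,
    mod_cast cc_six_mul_div_cc_three c, mod_cast cc_six_mul_div_cc_three d⟩

lemma E_zero_eq : E 0 = (ζ ^ 6 + ζ ^ 24) * A 0 := by
  ext i
  fin_cases i <;>
    simp [E, A, ζ_pow_six_add, ← mul_assoc, cc_twelve_mul_radius, cc_six_mul_radius]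

lemma F_zero_eq : F 0 = (ζ ^ 6 + ζ ^ 24) * B 0 := by
  ext i
  fin_cases i <;>
    simp [F, B, ζ_pow_six_add, ← mul_assoc, cc_twelve_mul_radius, cc_six_mul_radius]

lemma G_zero_eq : G 0 = (ζ ^ 6 + ζ ^ 24) * C 0 := by
  ext i
  fin_cases i <;>
    simp [G, C, ζ_pow_six_add, ← mul_assoc, cc_twelve_mul_radius, cc_six_mul_radius]

lemma H_zero_eq : H 0 = (ζ ^ 6 + ζ ^ 24) * D 0 := by
  ext i
  fin_cases i <;>
    simp [H, D, ζ_pow_six_add, ← mul_assoc, cc_twelve_mul_radius, cc_six_mul_radius]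

end Cycles

section InnerProducts

lemma ζ_mul_star (i : Fin 4) : ζ i * star (ζ i) = 1 := by
  have unit_norm : ‖ζ i‖ = 1 := (isPrimitiveRoot_ζ i).norm'_eq_one (by norm_num)
  simp [Complex.mul_conj, Complex.normSq_eq_norm_sq, unit_norm]

lemma rinner_ζ_pow_mul (n : ℕ) (v w : Fin 4 → ℂ) :
    rinner (ζ ^ n * v) (ζ ^ n * w) = rinner v w := by
  refine congrArg Complex.re (Finset.sum_congr rfl fun i _ ↦ ?_)
  have unit_norm : ζ i ^ n * star (ζ i) ^ n = 1 := by rw [← mul_pow, ζ_mul_star, one_pow]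
  simp only [Pi.mul_apply, Pi.pow_apply, star_mul', star_pow]
  linear_combination v i * star (w i) * unit_norm

lemma two_mul_rinner_ζ_pow_mul_A_zero (n : ℕ) :
    2 * rinner (ζ ^ n * A 0) (A 0) = r1 ^ 2 * cc (2 * n) + r4 ^ 2 * cc (22 * n)
      + r6 ^ 2 * cc (14 * n) + r7 ^ 2 * cc (26 * n) := by
  have unit_norm : ω * (starRingEnd ℂ) ω = 1 := by
    simp [Complex.mul_conj, Complex.normSq_eq_norm_sq, norm_ω]
  have hermitian : ∑ i, (ζ ^ n * A 0) i * star (A 0 i) =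
      (r1 ^ 2 : ℝ) * ω ^ (2 * n) + (r4 ^ 2 : ℝ) * ω ^ (22 * n)
        + (r6 ^ 2 : ℝ) * ω ^ (14 * n) + (r7 ^ 2 : ℝ) * ω ^ (26 * n) := by
    simp [Fin.sum_univ_four, A, ζ, ← pow_mul]
    linear_combination (r6 ^ 2 * ω ^ (14 * n) + r7 ^ 2 * ω ^ (26 * n)) * unit_norm
  rw [rinner, hermitian]
  simp only [Complex.add_re, Complex.re_ofReal_mul, re_ω_pow]
  push_cast
  ring

lemma two_mul_rinner_ζ_pow_mul_A_zero_eq_ramanujanSum (n : ℕ) :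
    15 * (2 * rinner (ζ ^ n * A 0) (A 0)) =
      4 * ramanujanSum n + 2 * (ramanujanSum (n + 1) + ramanujanSum (n - 1))
        + (ramanujanSum (n + 2) + ramanujanSum (n - 2)) := by
  have shift (e : ℤ) : (4 + 2 * cc e + cc (2 * e)) * cc (e * n) = 4 * cc (e * n)
      + 2 * (cc (e * (n + 1)) + cc (e * (n - 1))) + (cc (e * (n + 2)) + cc (e * (n - 2))) := by
    have product_one : cc (e * n) * cc e = cc (e * (n + 1)) + cc (e * (n - 1)) := by
      rw [cc_mul_cc, mul_add, mul_sub, mul_one]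
    have product_two : cc (e * n) * cc (2 * e) = cc (e * (n + 2)) + cc (e * (n - 2)) := by
      rw [cc_mul_cc, mul_add, mul_sub, mul_comm 2]
    linear_combination 2 * product_one + product_two
  have h2 := shift 2
  have h22 := shift 22
  have h14 := shift 14
  have h26 := shift 26
  norm_num only at h2 h22 h14 h26
  rw [two_mul_rinner_ζ_pow_mul_A_zero]
  simp only [ramanujanSum]
  linear_combination h2 + h22 + h14 + h26 + cc (2 * n) * r1_sq + cc (22 * n) * r4_sq
    + cc (14 * n) * r6_sq + cc (26 * n) * r7_sq

lemma two_mul_rinner_A (j : Fin 8) :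
    2 * rinner (ζ ^ (j : ℕ) * A 0) (A 0) = (![2, 1, 1, 1, 1, 1, 0, 0] : Fin 8 → ℝ) j := by
  have key := two_mul_rinner_ζ_pow_mul_A_zero_eq_ramanujanSum j
  simp only [ramanujanSum_eq_mul, cc_twenty_mul, cc_twelve_mul_add] at key
  fin_cases j <;> norm_num at key ⊢ <;> linarith

lemma rinner_A_zero_self : rinner (A 0) (A 0) = 1 := by
  have norm_two := two_mul_rinner_A 0
  simp only [Fin.val_zero, pow_zero, one_mul, Matrix.cons_val_zero] at norm_two
  linarith

end InnerProducts

section Lattice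

/-- The vector of `ℂ⁴` with given integer coordinates with respect to `A 0, …, A 7`. -/
def embed : (Fin 8 → ℤ) →ₗ[ℤ] (Fin 4 → ℂ) :=
  Fintype.linearCombination ℤ fun j ↦ ζ ^ (j : ℕ) * A 0

/-- Multiplication by `ζ` in the coordinates of `embed`: the companion matrix of the thirtieth
cyclotomic polynomial. -/
def rotate (x : Fin 8 → ℤ) : Fin 8 → ℤ :=
  ![-x 7, x 0 - x 7, x 1, x 2 + x 7, x 3 + x 7, x 4 + x 7, x 5, x 6 - x 7]

lemma ζ_pow_eight : ζ ^ 8 = -ζ ^ 7 + ζ ^ 5 + ζ ^ 4 + ζ ^ 3 - ζ - 1 :=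
  funext fun i ↦ cyclotomic_thirty_relation (isPrimitiveRoot_ζ i)

lemma ζ_pow_thirty : ζ ^ 30 = 1 :=
  funext fun i ↦ (isPrimitiveRoot_ζ i).pow_eq_one

lemma embed_rotate (x : Fin 8 → ℤ) : embed (rotate x) = ζ * embed x := by
  simp [embed, rotate, Fintype.linearCombination_apply, Fin.sum_univ_eight]
  linear_combination (-x 7 * A 0 : Fin 4 → ℂ) * ζ_pow_eight

lemma embed_rotate_iterate (n : ℕ) (x : Fin 8 → ℤ) : embed (rotate^[n] x) = ζ ^ n * embed x := by
  induction n with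
  | zero => simp
  | succ n ih => rw [Function.iterate_succ_apply', embed_rotate, ih, pow_succ', mul_assoc]

/-- Twice the inner product with `A 0` in the coordinates of `embed`. -/
def pairing (x : Fin 8 → ℤ) : ℤ := 2 * x 0 + x 1 + x 2 + x 3 + x 4 + x 5

lemma two_mul_rinner_embed (x : Fin 8 → ℤ) : 2 * rinner (embed x) (A 0) = pairing x := by
  calc 2 * rinner (embed x) (A 0) = 2 * rinnerForm.flip (A 0) (embed x) := rfl
    _ = ∑ j, x j * (2 * rinner (ζ ^ (j : ℕ) * A 0) (A 0)) := by
      rw [embed, Fintype.linearCombination_apply, map_sum, Finset.mul_sum]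
      refine Finset.sum_congr rfl fun j _ ↦ ?_
      rw [map_zsmul, zsmul_eq_mul, mul_left_comm]
      rfl
    _ = pairing x := by
      simp only [two_mul_rinner_A]
      simp [Fin.sum_univ_eight, pairing]
      ring

/-- Coordinates of the initial vectors of the eight cycles, in alphabetical order. -/
def seed : Fin 8 → Fin 8 → ℤ :=
  ![![1, 0, 0, 0, 0, 0, 0, 0], ![1, 0, -1, -1, 0, -1, 1, 1], ![-1, -1, 1, 0, 0, 1, 0, -1],
    ![-1, 1, 0, 0, 1, 0, -1, 0], ![-1, 0, 1, 1, 0, 0, 0, -1], ![0, 1, -1, 0, -1, 0, 0, 1],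
    ![-1, -1, 0, 1, 1, 1, -1, -1], ![1, 1, 0, -1, -1, -1, 0, 2]]

/-- Coordinates of the elements of `S`. -/
def roots : List (Fin 8 → ℤ) :=
  (List.finRange 8).flatMap fun k ↦ List.iterate rotate (seed k) 30

lemma mem_roots {x : Fin 8 → ℤ} : x ∈ roots ↔ ∃ k, ∃ n < 30, x = rotate^[n] (seed k) := by
  simp only [roots, List.mem_flatMap, List.mem_finRange, true_and, List.mem_iterate]

lemma embed_seed_zero : embed (seed 0) = A 0 := by
  simp [embed, seed, Fintype.linearCombination_apply, Fin.sum_univ_eight]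

lemma embed_rotate_iterate_add (m n : ℕ) (x : Fin 8 → ℤ) :
    embed (rotate^[m] x + rotate^[n] x) = (ζ ^ m + ζ ^ n) * embed x := by
  rw [map_add, embed_rotate_iterate, embed_rotate_iterate, add_mul]

lemma embed_rotate_iterate_add_sub (m n : ℕ) (x : Fin 8 → ℤ) :
    embed (rotate^[m] x + rotate^[n] x - x) = (ζ ^ m + ζ ^ n - 1) * embed x := by
  rw [map_sub, embed_rotate_iterate_add, sub_mul, one_mul]

lemma embed_seed (k : Fin 8) :
    embed (seed k) = ![A 0, B 0, C 0, D 0, E 0, F 0, G 0, H 0] k := by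
  have coord_B : seed 1 = rotate^[9] (seed 0) + rotate^[20] (seed 0) := by decide +kernel
  have coord_C : seed 2 = rotate^[2] (seed 1) + rotate^[28] (seed 1) - seed 1 := by
    decide +kernel
  have coord_D : seed 3 = rotate^[4] (seed 0) + rotate^[26] (seed 0) - seed 0 := by
    decide +kernel
  have coord_E : seed 4 = rotate^[6] (seed 0) + rotate^[24] (seed 0) := by decide +kernel
  have coord_F : seed 5 = rotate^[6] (seed 1) + rotate^[24] (seed 1) := by decide +kernel
  have coord_G : seed 6 = rotate^[6] (seed 2) + rotate^[24] (seed 2) := by decide +kernel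
  have coord_H : seed 7 = rotate^[6] (seed 3) + rotate^[24] (seed 3) := by decide +kernel
  have eq_A := embed_seed_zero
  have eq_B : embed (seed 1) = B 0 := by
    rw [coord_B, embed_rotate_iterate_add, eq_A, B_zero_eq]
  have eq_C : embed (seed 2) = C 0 := by
    rw [coord_C, embed_rotate_iterate_add_sub, eq_B, C_zero_eq]
  have eq_D : embed (seed 3) = D 0 := by
    rw [coord_D, embed_rotate_iterate_add_sub, eq_A, D_zero_eq]
  have eq_E : embed (seed 4) = E 0 := by
    rw [coord_E, embed_rotate_iterate_add, eq_A, E_zero_eq]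
  have eq_F : embed (seed 5) = F 0 := by
    rw [coord_F, embed_rotate_iterate_add, eq_B, F_zero_eq]
  have eq_G : embed (seed 6) = G 0 := by
    rw [coord_G, embed_rotate_iterate_add, eq_C, G_zero_eq]
  have eq_H : embed (seed 7) = H 0 := by
    rw [coord_H, embed_rotate_iterate_add, eq_D, H_zero_eq]
  fin_cases k
  exacts [eq_A, eq_B, eq_C, eq_D, eq_E, eq_F, eq_G, eq_H]

lemma mem_S_iff {v : Fin 4 → ℂ} :
    v ∈ S ↔ ∃ (n : Fin 30) (k : Fin 8), v = ζ ^ (n : ℕ) * embed (seed k) := by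
  refine exists_congr fun n ↦ ?_
  simp [Fin.exists_fin_succ, embed_seed, ← A_eq, ← B_eq, ← C_eq, ← D_eq, ← E_eq, ← F_eq,
    ← G_eq, ← H_eq]

lemma ζ_pow_mul_embed_seed_mem (n : ℕ) (k : Fin 8) : ζ ^ n * embed (seed k) ∈ S :=
  mem_S_iff.mpr ⟨Fin.ofNat 30 n, k, by rw [Fin.val_ofNat, ← pow_eq_pow_mod n ζ_pow_thirty]⟩

end Lattice

section Closure

open Set

lemma mapsTo_ζ_pow_mul (n : ℕ) : MapsTo (ζ ^ n * ·) S S := by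
  intro w hw
  obtain ⟨m, k, rfl⟩ := mem_S_iff.mp hw
  simpa only [← mul_assoc, ← pow_add] using ζ_pow_mul_embed_seed_mem (n + m) k

lemma surjOn_ζ_pow_mul (n : ℕ) : SurjOn (ζ ^ n * ·) S S := by
  intro w hw
  refine ⟨ζ ^ (29 * n) * w, mapsTo_ζ_pow_mul _ hw, ?_⟩
  have full_turns : ζ ^ n * ζ ^ (29 * n) = 1 := by
    rw [← pow_add, show n + 29 * n = 30 * n by ring, pow_mul, ζ_pow_thirty, one_pow]
  simp only [← mul_assoc, full_turns, one_mul]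

lemma mapsTo_reflect_ζ_pow_mul {v : Fin 4 → ℂ} (hv : MapsTo (reflect v) S S) (n : ℕ) :
    MapsTo (reflect (ζ ^ n * v)) S S :=
  mapsTo_reflect_map (f := LinearMap.mulLeft ℝ (ζ ^ n)) (rinner_ζ_pow_mul n)
    (mapsTo_ζ_pow_mul n) (surjOn_ζ_pow_mul n) hv

/-- The reflection in `A 0` in the coordinates of `embed`. -/
def reflectA (x : Fin 8 → ℤ) : Fin 8 → ℤ := x - pairing x • seed 0

lemma embed_reflectA (x : Fin 8 → ℤ) : embed (reflectA x) = reflect (A 0) (embed x) := by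
  rw [reflectA, map_sub, map_zsmul, embed_seed_zero, reflect_apply, two_mul_rinner_embed,
    Int.cast_smul_eq_zsmul]

lemma reflectA_mem_roots {x : Fin 8 → ℤ} (hx : x ∈ roots) : reflectA x ∈ roots := by
  have check : ∀ y ∈ roots, pairing y = 0 ∨ reflectA y ∈ roots := by decide +kernel
  refine (check x hx).elim (fun orthogonal ↦ ?_) id
  rwa [reflectA, orthogonal, zero_smul, sub_zero]

lemma mapsTo_reflect_A_zero : MapsTo (reflect (A 0)) S S := by
  intro w hw
  obtain ⟨n, k, rfl⟩ := mem_S_iff.mp hw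
  have hx : rotate^[n] (seed k) ∈ roots := mem_roots.mpr ⟨k, n, n.isLt, rfl⟩
  obtain ⟨l, m, -, h⟩ := mem_roots.mp (reflectA_mem_roots hx)
  rw [← embed_rotate_iterate, ← embed_reflectA, h, embed_rotate_iterate]
  exact ζ_pow_mul_embed_seed_mem m l

lemma mapsTo_reflect_embed_seed_of_eq {k l : Fin 8} (m n : ℕ)
    (h : seed k = rotate^[m] (reflectA (rotate^[n] (seed l))))
    (hl : MapsTo (reflect (embed (seed l))) S S) : MapsTo (reflect (embed (seed k))) S S := by
  rw [h, embed_rotate_iterate, embed_reflectA, embed_rotate_iterate]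
  exact mapsTo_reflect_ζ_pow_mul (mapsTo_reflect_reflect rinner_A_zero_self
    mapsTo_reflect_A_zero (mapsTo_reflect_ζ_pow_mul hl n)) m

lemma mapsTo_reflect_embed_seed (k : Fin 8) : MapsTo (reflect (embed (seed k))) S S := by
  have h0 : MapsTo (reflect (embed (seed 0))) S S := embed_seed_zero ▸ mapsTo_reflect_A_zero
  have h1 : MapsTo (reflect (embed (seed 1))) S S :=
    mapsTo_reflect_embed_seed_of_eq 5 4 (by decide +kernel) h0
  fin_cases k
  · exact h0
  · exact h1
  · exact mapsTo_reflect_embed_seed_of_eq 10 27 (by decide +kernel) h1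
  · exact mapsTo_reflect_embed_seed_of_eq 4 2 (by decide +kernel) h1
  · exact mapsTo_reflect_embed_seed_of_eq 9 27 (by decide +kernel) h0
  · exact mapsTo_reflect_embed_seed_of_eq 10 28 (by decide +kernel) h1
  · exact mapsTo_reflect_embed_seed_of_eq 6 2 (by decide +kernel) h0
  · exact mapsTo_reflect_embed_seed_of_eq 8 29 (by decide +kernel) h0

end Closure

/-- S is closed under reflections in its elements. -/
theorem stmt10 : ∀ v ∈ S, ∀ w ∈ S, w - (2 * rinner w v) • v ∈ S := by
  intro v hv w hw
  obtain ⟨n, k, rfl⟩ := mem_S_iff.mp hv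
  exact mapsTo_reflect_ζ_pow_mul (mapsTo_reflect_embed_seed k) n hw

end Triacontagonal
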